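/- Let d ≥ 1 and m, m' ∈ ℝ^d. There exists a coupling (X,Y) of the Gaussian laws N(m, I_d) and N(m', I_d) such that P(X ≠ Y) ≤ min(‖m−m'‖₂/√(2π), 1). Equivalently, the total variation distance between N(m,I_d) and N(m',I_d) is at most ‖m−m'‖₂/√(2π). -/

import Mathlib

open MeasureTheory ProbabilityTheory

lemma aux_le (c : ℝ) (hc : 0 ≤ c) :
    (gaussianReal c 1).restrict (Set.Iic (c / 2)) ≤
      (gaussianReal 0 1).restrict (Set.Iic (c / 2)) := by
  rw [gaussianReal_of_var_ne_zero _ one_ne_zero, gaussianReal_of_var_ne_zero _ one_ne_zero,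
    restrict_withDensity measurableSet_Iic, restrict_withDensity measurableSet_Iic]
  apply withDensity_mono
  filter_upwards [ae_restrict_mem measurableSet_Iic] with x hx
  have hx : x ≤ c / 2 := hx
  unfold gaussianPDF gaussianPDFReal
  apply ENNReal.ofReal_le_ofReal
  gcongr ?_ * Real.exp ?_
  simp only [NNReal.coe_one]
  nlinarith

lemma aux_mass (c : ℝ) (hc : 0 ≤ c) :
    gaussianReal 0 1 (Set.Ioc (-(c / 2)) (c / 2)) ≤
      ENNReal.ofReal (c / Real.sqrt (2 * Real.pi)) := by
  rw [gaussianReal_apply _ one_ne_zero]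
  calc ∫⁻ x in Set.Ioc (-(c / 2)) (c / 2), gaussianPDF 0 1 x
      ≤ ∫⁻ x in Set.Ioc (-(c / 2)) (c / 2), ENNReal.ofReal ((Real.sqrt (2 * Real.pi))⁻¹) := by
        apply lintegral_mono
        intro x
        unfold gaussianPDF gaussianPDFReal
        apply ENNReal.ofReal_le_ofReal
        simp only [NNReal.coe_one, mul_one]
        apply mul_le_of_le_one_right (by positivity)
        rw [Real.exp_le_one_iff]
        nlinarith [sq_nonneg (x - 0)]
    _ = _ := by
        rw [setLIntegral_const, Real.volume_Ioc, ← ENNReal.ofReal_mul (by positivity)]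
        congr 1
        ring

lemma aux_coupling (c : ℝ) (hc : 0 ≤ c) :
    ∃ μ : Measure (ℝ × ℝ), μ.map Prod.fst = gaussianReal 0 1 ∧
      μ.map Prod.snd = gaussianReal c 1 ∧
      μ {p | p.1 ≠ p.2} ≤ ENNReal.ofReal (c / Real.sqrt (2 * Real.pi)) := by
  set P := gaussianReal 0 1 with hP
  set Q := gaussianReal c 1 with hQ
  have : NullSingletonClass P := nullSingletonClass_gaussianReal one_ne_zero
  have : NullSingletonClass Q := nullSingletonClass_gaussianReal one_ne_zero
  set A := Set.Iic (c / 2) with hA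
  set B := Set.Ioi (c / 2) with hB
  have hcompl : Aᶜ = B := by simp [hA, hB]
  have hAm : MeasurableSet A := measurableSet_Iic
  have hle : Q.restrict A ≤ P.restrict A := aux_le c hc
  set ρ := P.restrict A - Q.restrict A with hρ
  have hρadd : ρ + Q.restrict A = P.restrict A := Measure.sub_add_cancel_of_le hle
  set r : ℝ → ℝ := fun x => c - x with hr
  have hrm : Measurable r := by fun_prop
  have hPr : P.map r = Q := by
    rw [hP, hQ, hr, gaussianReal_map_const_sub, sub_zero]
  have hQr : Q.map r = P := by
    rw [hP, hQ, hr, gaussianReal_map_const_sub, sub_self]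
  have hpre : r ⁻¹' (Set.Ici (c / 2)) = A := by
    ext x; simp only [hr, hA, Set.mem_preimage, Set.mem_Ici, Set.mem_Iic]
    constructor <;> intro h <;> linarith
  have hPA : (P.restrict A).map r = Q.restrict B := by
    rw [hB, Measure.restrict_congr_set Ioi_ae_eq_Ici, ← hPr,
      Measure.restrict_map hrm measurableSet_Ici, hpre]
  have hQA : (Q.restrict A).map r = P.restrict B := by
    rw [hB, Measure.restrict_congr_set Ioi_ae_eq_Ici, ← hQr,
      Measure.restrict_map hrm measurableSet_Ici, hpre]
  have hρr : ρ.map r + P.restrict B = Q.restrict B := by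
    rw [← hPA, ← hQA, ← Measure.map_add _ _ hrm, hρadd]
  set ν := P.restrict B + Q.restrict A with hν
  have hdm : Measurable (fun x : ℝ => (x, x)) := by fun_prop
  have hem : Measurable (fun x : ℝ => (x, r x)) := by fun_prop
  refine ⟨ν.map (fun x => (x, x)) + ρ.map (fun x => (x, r x)), ?_, ?_, ?_⟩
  · rw [Measure.map_add _ _ measurable_fst, Measure.map_map measurable_fst hdm,
      Measure.map_map measurable_fst hem]
    change ν.map id + ρ.map id = P
    rw [Measure.map_id, Measure.map_id, hν, add_assoc, add_comm (Q.restrict A), hρadd, ← hcompl,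
      Measure.restrict_compl_add_restrict hAm]
  · rw [Measure.map_add _ _ measurable_snd, Measure.map_map measurable_snd hdm,
      Measure.map_map measurable_snd hem]
    change ν.map id + ρ.map r = Q
    rw [Measure.map_id, hν, add_comm (P.restrict B), add_assoc, add_comm (P.restrict B), hρr,
      ← hcompl, Measure.restrict_add_restrict_compl hAm]
  · have hD : MeasurableSet {p : ℝ × ℝ | p.1 ≠ p.2} :=
      (measurableSet_eq_fun measurable_fst measurable_snd).compl
    rw [Measure.add_apply, Measure.map_apply hdm hD, Measure.map_apply hem hD]
    have h0 : (fun x : ℝ => (x, x)) ⁻¹' {p : ℝ × ℝ | p.1 ≠ p.2} = ∅ := by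
      ext x; simp
    rw [h0, measure_empty, zero_add]
    refine le_trans (measure_mono (Set.subset_univ _)) (le_trans ?_ (aux_mass c hc))
    have h1 : ρ Set.univ + Q A = P A := by
      have := congrArg (fun m => m Set.univ) hρadd
      simpa using this
    have h2 : Q A = P (Set.Iic (-(c / 2))) := by
      have : Q = P.map (fun x => x + c) := by
        rw [hP, hQ, gaussianReal_map_add_const, zero_add]
      rw [this, Measure.map_apply (by fun_prop) hAm]
      congr 1
      ext x; simp only [hA, Set.mem_preimage, Set.mem_Iic]
      constructor <;> intro h <;> linarith
    have h3 : P A = P (Set.Ioc (-(c / 2)) (c / 2)) + P (Set.Iic (-(c / 2))) := by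
      rw [hA, ← Set.Iic_union_Ioc_eq_Iic (by linarith : -(c / 2) ≤ c / 2),
        measure_union _ measurableSet_Ioc, add_comm]
      exact Set.Iic_disjoint_Ioc le_rfl
    rw [h2, h3] at h1
    exact ((ENNReal.add_left_inj (measure_ne_top _ _)).1 h1).le

lemma aux_basis (d : ℕ) (hd : 1 ≤ d) (u : EuclideanSpace ℝ (Fin d)) :
    ∃ (b : OrthonormalBasis (Fin d) ℝ (EuclideanSpace ℝ (Fin d))) (c : Fin d → ℝ),
      (∀ i, 0 ≤ c i) ∧ ∑ i, c i • b i = u ∧ ∑ i, c i = ‖u‖ := by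
  by_cases hu : u = 0
  · exact ⟨EuclideanSpace.basisFun _ _, 0, by simp, by simp [hu], by simp [hu]⟩
  have hn : ‖u‖ ≠ 0 := norm_ne_zero_iff.2 hu
  let i0 : Fin d := ⟨0, hd⟩
  have hcard : Module.finrank ℝ (EuclideanSpace ℝ (Fin d)) = Fintype.card (Fin d) := by simp
  have horth : Orthonormal ℝ (({i0} : Set (Fin d)).domRestrict (fun _ => ‖u‖⁻¹ • u)) := by
    constructor
    · intro i
      simp [norm_smul, hn]
    · intro i j hij
      exact absurd (Subsingleton.elim i j) hij
  obtain ⟨b, hb⟩ := horth.exists_orthonormalBasis_extension_of_card_eq hcard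
  refine ⟨b, fun i => if i = i0 then ‖u‖ else 0, ?_, ?_, ?_⟩
  · intro i; dsimp only; split_ifs <;> positivity
  · simp [ite_smul, hb i0 rfl, smul_smul, hn]
  · simp

lemma aux_rot (d : ℕ) (b : OrthonormalBasis (Fin d) ℝ (EuclideanSpace ℝ (Fin d))) :
    (Measure.pi fun _ : Fin d => gaussianReal 0 1).map (fun x j => ∑ i, x i * b i j) =
      Measure.pi fun _ : Fin d => gaussianReal 0 1 := by
  have h := stdGaussian_eq_map_pi_orthonormalBasis b
  rw [← map_pi_eq_stdGaussian] at h
  have h' := congrArg (fun m => Measure.map WithLp.ofLp m) h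
  rw [Measure.map_map (by fun_prop) (by fun_prop), Measure.map_map (by fun_prop) (by fun_prop)] at h'
  have e1 : (WithLp.ofLp ∘ WithLp.toLp 2 : (Fin d → ℝ) → (Fin d → ℝ)) = id := rfl
  rw [e1, Measure.map_id] at h'
  refine Eq.trans ?_ h'.symm
  congr 1
  ext x j
  simp

lemma aux_shift (d : ℕ) (c : Fin d → ℝ) :
    (Measure.pi fun _ : Fin d => gaussianReal 0 1).map (fun x i => x i + c i) =
      Measure.pi fun i : Fin d => gaussianReal (c i) 1 := by
  have : ∀ i, (gaussianReal 0 1).map (fun x => x + c i) = gaussianReal (c i) 1 := fun i => by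
    rw [gaussianReal_map_add_const, zero_add]
  have : ∀ i, SigmaFinite ((gaussianReal 0 1).map (fun x => x + c i)) := fun i => by
    rw [this i]; infer_instance
  rw [Measure.pi_map_pi (f := fun i x => x + c i) (fun i => by fun_prop)]
  simp_rw [‹∀ i, (gaussianReal 0 1).map (fun x => x + c i) = gaussianReal (c i) 1›]

lemma aux_affine (d : ℕ) (b : OrthonormalBasis (Fin d) ℝ (EuclideanSpace ℝ (Fin d)))
    (c m : Fin d → ℝ) :
    (Measure.pi fun i : Fin d => gaussianReal (c i) 1).map
        (fun x j => ∑ i, x i * b i j + m j) =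
      Measure.pi fun j : Fin d => gaussianReal (∑ i, c i * b i j + m j) 1 := by
  rw [← aux_shift d c, Measure.map_map (by fun_prop) (by fun_prop), 
    ← aux_shift d (fun j => ∑ i, c i * b i j + m j)]
  conv_rhs => rw [← aux_rot d b]
  rw [Measure.map_map (by fun_prop) (by fun_prop)]
  congr 1
  ext x j
  simp [add_mul, Finset.sum_add_distrib, add_assoc]

/-- Let `d ≥ 1` and `m, m' ∈ ℝ^d`. There exists a coupling `(X,Y)` of the Gaussian laws
`N(m, I_d)` and `N(m', I_d)` such that
`P(X ≠ Y) ≤ min (‖m − m'‖₂ / √(2π)) 1`; equivalently, the total variation distance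
between `N(m, I_d)` and `N(m', I_d)` is at most `‖m − m'‖₂/√(2π)`. -/
theorem stmt_7 (d : ℕ) (hd : 1 ≤ d) (m m' : Fin d → ℝ) :
    ∃ μ : Measure ((Fin d → ℝ) × (Fin d → ℝ)), IsProbabilityMeasure μ ∧
      μ.map Prod.fst = Measure.pi (fun i => gaussianReal (m i) 1) ∧
      μ.map Prod.snd = Measure.pi (fun i => gaussianReal (m' i) 1) ∧
      (μ {p | p.1 ≠ p.2}).toReal
        ≤ min (Real.sqrt (∑ i, (m i - m' i) ^ 2) / Real.sqrt (2 * Real.pi)) 1 := by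
  obtain ⟨b, c, hc, hcu, hcn⟩ := aux_basis d hd (WithLp.toLp 2 (m' - m))
  choose γ hγ1 hγ2 hγ3 using fun i => aux_coupling (c i) (hc i)
  have hγp : ∀ i, IsProbabilityMeasure (γ i) := fun i => by
    constructor
    have : (γ i).map Prod.fst Set.univ = 1 := by rw [hγ1 i]; exact measure_univ
    rwa [Measure.map_apply measurable_fst MeasurableSet.univ, Set.preimage_univ] at this
  let T : (Fin d → ℝ) → (Fin d → ℝ) := fun x j => ∑ i, x i * b i j + m j
  have hT : Measurable T := by fun_prop
  have hf1 : Measurable (fun (p : Fin d → ℝ × ℝ) i => (p i).1) := by fun_prop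
  have hf2 : Measurable (fun (p : Fin d → ℝ × ℝ) i => (p i).2) := by fun_prop
  let F : (Fin d → ℝ × ℝ) → (Fin d → ℝ) × (Fin d → ℝ) :=
    fun p => (T (fun i => (p i).1), T (fun i => (p i).2))
  have hF : Measurable F := (hT.comp hf1).prodMk (hT.comp hf2)
  have hprob : IsProbabilityMeasure ((Measure.pi γ).map F) :=
    Measure.isProbabilityMeasure_map hF.aemeasurable
  refine ⟨(Measure.pi γ).map F, hprob, ?_, ?_, ?_⟩
  · rw [Measure.map_map measurable_fst hF]
    change (Measure.pi γ).map (T ∘ fun p i => (p i).1) = _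
    have : ∀ i, SigmaFinite ((γ i).map Prod.fst) := fun i => by rw [hγ1 i]; infer_instance
    rw [← Measure.map_map hT hf1,
      Measure.pi_map_pi (f := fun _ => Prod.fst) (fun i => by fun_prop)]
    simp_rw [hγ1]
    have := aux_affine d b 0 m
    simpa using this
  · rw [Measure.map_map measurable_snd hF]
    change (Measure.pi γ).map (T ∘ fun p i => (p i).2) = _
    have : ∀ i, SigmaFinite ((γ i).map Prod.snd) := fun i => by rw [hγ2 i]; infer_instance
    rw [← Measure.map_map hT hf2,
      Measure.pi_map_pi (f := fun _ => Prod.snd) (fun i => by fun_prop)]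
    simp_rw [hγ2]
    have := aux_affine d b c m
    rw [this]
    congr 1
    ext1 j
    have hj := congrArg (fun v : EuclideanSpace ℝ (Fin d) => v j) hcu
    simp at hj
    rw [hj, sub_add_cancel]
  · apply le_min
    · have hD : MeasurableSet {p : (Fin d → ℝ) × (Fin d → ℝ) | p.1 ≠ p.2} :=
        (measurableSet_eq_fun measurable_fst measurable_snd).compl
      have hD1 : MeasurableSet {p : ℝ × ℝ | p.1 ≠ p.2} :=
        (measurableSet_eq_fun measurable_fst measurable_snd).compl
      have hnorm : Real.sqrt (∑ i, (m i - m' i) ^ 2) = ∑ i, c i := by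
        rw [hcn, EuclideanSpace.norm_eq]
        congr 1
        apply Finset.sum_congr rfl
        intro i _
        simp [sub_sq_comm]
      rw [hnorm]
      apply ENNReal.toReal_le_of_le_ofReal
      · exact div_nonneg (Finset.sum_nonneg fun i _ => hc i) (Real.sqrt_nonneg _)
      rw [Measure.map_apply hF hD, Finset.sum_div,
        ENNReal.ofReal_sum_of_nonneg fun i _ => div_nonneg (hc i) (Real.sqrt_nonneg _)]
      calc Measure.pi γ (F ⁻¹' {p | p.1 ≠ p.2})
          ≤ Measure.pi γ (⋃ i, Function.eval i ⁻¹' {p : ℝ × ℝ | p.1 ≠ p.2}) := by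
            apply measure_mono
            intro p hp
            by_contra hcon
            apply hp
            simp only [Set.mem_iUnion, Set.mem_preimage, Function.eval, Set.mem_ofPred_eq,
              not_exists, not_not] at hcon
            simp only [F, hcon]
        _ ≤ ∑ i, Measure.pi γ (Function.eval i ⁻¹' {p : ℝ × ℝ | p.1 ≠ p.2}) :=
            measure_iUnion_fintype_le _ _
        _ ≤ _ := by
            apply Finset.sum_le_sum
            intro i _
            rw [(measurePreserving_eval γ i).measure_preimage hD1.nullMeasurableSet]
            exact hγ3 i
    · exact ENNReal.toReal_le_of_le_ofReal zero_le_one (by simpa using prob_le_one)
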